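/- Let x ∈ ℤ[i], and let a word w over D = {0, 1, −1, i, −i} be a concatenation w = u_1 u_2 ⋯ u_n of blocks u_ℓ from the set C = {0, 001, 00i, 00(−1), 00(−i)} such that w, read as a digit string (most significant digit first), is a (β, D)-representation of x in base β = i − 1. Let d_ℓ ∈ D be the last digit of the block u_ℓ. Then the number of nonzero digits of w equals the number of indices ℓ with d_ℓ ≠ 0, and the number of optimal representations of x equals e A_{d_1} A_{d_2} ⋯ A_{d_n} eᵀ, where e = (1, 0, 0, 0, 0, 0, 0, 0, 0) ∈ ℤ^{1×9}. -/

import Mathlib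

/-!
Fix `h` and count, for each `z`, the normalized representations of `z` with `weight + j = h`
(`cnt j h z`). Since `β` divides a Gaussian integer iff the sum of its coordinates is even, the least
significant digit of `βz` is `0` and that of an odd `z` is one of the four units. Hence
`cnt j h (βz) = cnt j h z`, and `cnt j h z = ∑_u cnt (j+1) h ((z-u)/β)` for odd `z`
(`cnt_even`, `cnt_odd`).

Lower bounds on weights obey the same recursions (`WLB`). Adding a unit to `z` raises the minimal
weight by at most one (`exists_rep_add_unit`: two units sum to `0`, to `β` times a unit or to `β²`
times a unit, so the carry is again a single unit). From this it follows that the minimal weight of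
`βz + u` is at least that of `z` (`WLB.mul_add_unit`), and that the minimal weight of `β³z + u`
exceeds that of `z` by one (`WLB.block`). In particular a concatenation of blocks has minimal weight.

If every representation of `x` has weight at least `h`, the vector `stateVec h x` collects
the number of representations of `x` of weight `h` and the numbers of representations of `x - u` and
`x - (1+i)u` of weight `h - 1`, for units `u`. Unfolding the recursions and discarding the terms
that vanish by the lower bounds yields `stateVec h (βx) = stateVec h x · A_0` and
`stateVec (h+1) (β³x+1) = stateVec h x · A_1`; multiplication by `i` permutes the entries by `R`, which gives
the remaining units. Induction on the blocks from `stateVec 0 0 = e` finishes the proof.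
-/

open Matrix

noncomputable section

/-- The imaginary unit `i` in the Gaussian integers. -/
def gI : GaussianInt := ⟨0, 1⟩

/-- The base `β = i - 1`. -/
def gβ : GaussianInt := ⟨-1, 1⟩

/-- The digit set `D = {0, 1, -1, i, -i}`. -/
def gD : Set GaussianInt := {0, 1, -1, gI, -gI}

/-- Value of a digit string `d_{n-1} ⋯ d_0`, given as a list with the least
significant digit first: `gval [d_0, d_1, …, d_{n-1}] = Σ d_j β^j`. -/
def gval (l : List GaussianInt) : GaussianInt :=
  l.foldr (fun d acc => d + gβ * acc) 0

/-- `l` (least significant digit first) is a `(β, D)`-representation of `x`. -/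
def gIsRep (x : GaussianInt) (l : List GaussianInt) : Prop :=
  (∀ d ∈ l, d ∈ gD) ∧ gval l = x

/-- A representation is normalized if it is empty or its leading digit
(the last entry of the LSD-first list) is nonzero. -/
def gNormalized (l : List GaussianInt) : Prop := l.getLast? ≠ some 0

/-- Number of nonzero digits (Hamming weight). -/
def gweight (l : List GaussianInt) : ℕ := (l.filter (fun d => d ≠ 0)).length

/-- A representation of `x` is optimal if it is normalized and its number of
nonzero digits is minimal among all representations of `x`. -/
def gOptimal (x : GaussianInt) (l : List GaussianInt) : Prop :=
  gIsRep x l ∧ gNormalized l ∧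
    ∀ l' : List GaussianInt, gIsRep x l' → gweight l ≤ gweight l'

/-- The number of optimal representations of `x`. -/
def gnumOpt (x : GaussianInt) : ℕ := Nat.card {l : List GaussianInt // gOptimal x l}

/-- The row vector `e = (1,0,0,0,0,0,0,0,0)`. -/
def e9 : Matrix (Fin 1) (Fin 9) ℤ := !![1,0,0,0,0,0,0,0,0]

/-- The permutation matrix `R = diag(1, P1, P1)`. -/
def R9 : Matrix (Fin 9) (Fin 9) ℤ :=
  !![1,0,0,0,0,0,0,0,0;
     0,0,1,0,0,0,0,0,0;
     0,0,0,1,0,0,0,0,0;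
     0,0,0,0,1,0,0,0,0;
     0,1,0,0,0,0,0,0,0;
     0,0,0,0,0,0,1,0,0;
     0,0,0,0,0,0,0,1,0;
     0,0,0,0,0,0,0,0,1;
     0,0,0,0,0,1,0,0,0]

/-- The matrix `A_1`. -/
def A1 : Matrix (Fin 9) (Fin 9) ℤ :=
  !![1,1,0,0,0,0,0,0,0;
     0,0,0,0,0,0,0,0,0;
     2,0,1,1,0,0,1,0,0;
     2,0,0,1,1,0,0,1,0;
     0,0,0,0,0,0,0,0,0;
     0,0,0,0,0,0,0,0,0;
     1,0,0,1,0,0,0,0,0;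
     0,0,0,0,0,0,0,0,0;
     0,0,0,0,0,0,0,0,0]

/-- The matrix `A_0`. -/
def A0 : Matrix (Fin 9) (Fin 9) ℤ :=
  !![1,0,0,0,0,0,0,0,0;
     0,0,0,0,0,0,1,0,0;
     0,0,0,0,0,0,0,1,0;
     0,0,0,0,0,0,0,0,1;
     0,0,0,0,0,1,0,0,0;
     0,0,0,0,0,0,0,0,0;
     0,0,0,0,0,0,0,0,0;
     0,0,0,0,0,0,0,0,0;
     0,0,0,0,0,0,0,0,0]

/-- The matrix `A_i = Rᵀ A_1 R`. -/
def Ai : Matrix (Fin 9) (Fin 9) ℤ := R9ᵀ * A1 * R9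

/-- The matrix `A_{-1} = Rᵀ A_i R`. -/
def Am1 : Matrix (Fin 9) (Fin 9) ℤ := R9ᵀ * Ai * R9

/-- The matrix `A_{-i} = Rᵀ A_{-1} R`. -/
def Ami : Matrix (Fin 9) (Fin 9) ℤ := R9ᵀ * Am1 * R9

/-- The matrix `A_d` associated with a digit `d ∈ D`. -/
def Amat (d : GaussianInt) : Matrix (Fin 9) (Fin 9) ℤ :=
  if d = 0 then A0
  else if d = 1 then A1
  else if d = gI then Ai
  else if d = -1 then Am1
  else Ami

/-! ### Digits and units -/

/-- The nonzero digits, i.e. the units of the Gaussian integers. -/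
def IsU (u : GaussianInt) : Prop := u = 1 ∨ u = -1 ∨ u = gI ∨ u = -gI

lemma mem_gD_iff {d : GaussianInt} : d ∈ gD ↔ d = 0 ∨ IsU d := by
  simp [gD, IsU]

lemma IsU.ne_zero {u : GaussianInt} (hu : IsU u) : u ≠ 0 := by
  rcases hu with rfl | rfl | rfl | rfl <;> simp [Zsqrtd.ext_iff, gI]

lemma IsU.neg {u : GaussianInt} (hu : IsU u) : IsU (-u) := by
  rcases hu with rfl | rfl | rfl | rfl <;> simp [IsU]

lemma IsU.mul_gI {u : GaussianInt} (hu : IsU u) : IsU (gI * u) := by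
  rcases hu with rfl | rfl | rfl | rfl <;> simp [IsU, Zsqrtd.ext_iff, gI]

lemma gβ_parity (z : GaussianInt) : (gβ * z).re + (gβ * z).im = -2 * z.im := by
  simp [gβ]; ring

lemma IsU.odd {u : GaussianInt} (hu : IsU u) : (u.re + u.im) % 2 = 1 := by
  rcases hu with rfl | rfl | rfl | rfl <;> simp [gI]

lemma gβ_mul_inj {a b : GaussianInt} (hab : gβ * a = gβ * b) : a = b := by
  have h1 := congrArg Zsqrtd.re hab
  have h2 := congrArg Zsqrtd.im hab
  simp [gβ] at h1 h2
  ext <;> omega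

/-- The carry produced by adding two units is `0` or a single unit, at position one or two. -/
lemma IsU.add {d u : GaussianInt} (hd : IsU d) (hu : IsU u) :
    d + u = 0 ∨ (∃ v, IsU v ∧ d + u = gβ * v) ∨ (∃ v, IsU v ∧ d + u = gβ * (gβ * v)) := by
  have hdu : d = -u ∨ d = gI * u ∨ d = -(gI * u) ∨ d = u := by
    rcases hd with rfl | rfl | rfl | rfl <;> rcases hu with rfl | rfl | rfl | rfl <;>
      simp [Zsqrtd.ext_iff, gI]
  rcases hdu with rfl | rfl | rfl | rfl
  · exact Or.inl (by ring)
  · refine Or.inr (Or.inl ⟨-(gI * u), hu.mul_gI.neg, ?_⟩)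
    ext <;> simp [gβ, gI] <;> ring
  · refine Or.inr (Or.inl ⟨-u, hu.neg, ?_⟩)
    ext <;> simp [gβ, gI]
  · refine Or.inr (Or.inr ⟨gI * d, hd.mul_gI, ?_⟩)
    ext <;> simp [gβ, gI] <;> ring

/-- Every Gaussian integer is either `βa` or `βa + 1`. -/
lemma gauss_cases (z : GaussianInt) : (∃ a, z = gβ * a) ∨ ∃ a, z = gβ * a + 1 := by
  rcases Int.emod_two_eq_zero_or_one (z.re + z.im) with h0 | h0
  · refine Or.inl ⟨⟨(z.im - z.re) / 2, -(z.re + z.im) / 2⟩, ?_⟩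
    ext <;> simp [gβ] <;> omega
  · refine Or.inr ⟨⟨(z.im - z.re + 1) / 2, -(z.re + z.im - 1) / 2⟩, ?_⟩
    ext <;> simp [gβ] <;> omega

/-! ### Digit strings -/

@[simp] lemma gval_nil : gval [] = 0 := rfl

@[simp] lemma gval_cons (d : GaussianInt) (l : List GaussianInt) :
    gval (d :: l) = d + gβ * gval l := rfl

@[simp] lemma gweight_nil : gweight [] = 0 := rfl

@[simp] lemma gweight_cons_zero (l : List GaussianInt) : gweight (0 :: l) = gweight l := by
  simp [gweight]

lemma gweight_cons_unit {u : GaussianInt} (hu : u ≠ 0) (l : List GaussianInt) :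
    gweight (u :: l) = gweight l + 1 := by
  simp [gweight, hu]

lemma gweight_append (l m : List GaussianInt) : gweight (l ++ m) = gweight l + gweight m := by
  simp [gweight]

lemma gweight_reverse (l : List GaussianInt) : gweight l.reverse = gweight l := by
  simp [gweight, List.filter_reverse]

lemma gIsRep_nil_iff {z : GaussianInt} : gIsRep z [] ↔ z = 0 := by
  simp [gIsRep, eq_comm]

lemma gIsRep_cons {z d : GaussianInt} {l : List GaussianInt} :
    gIsRep z (d :: l) ↔ d ∈ gD ∧ (∀ e ∈ l, e ∈ gD) ∧ z = d + gβ * gval l := by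
  rw [gIsRep, List.forall_mem_cons, and_assoc, gval_cons, eq_comm (b := z)]

lemma gIsRep.cons {a d : GaussianInt} {l : List GaussianInt} (hd : d ∈ gD) (hl : gIsRep a l) :
    gIsRep (d + gβ * a) (d :: l) :=
  gIsRep_cons.2 ⟨hd, hl.1, by rw [hl.2]⟩

/-- A representation of a multiple of `β` has least significant digit `0`. -/
lemma gIsRep.even {a d : GaussianInt} {l : List GaussianInt} (h : gIsRep (gβ * a) (d :: l)) :
    d = 0 ∧ gIsRep a l := by
  obtain ⟨hd, hl, hz⟩ := gIsRep_cons.1 h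
  rcases mem_gD_iff.1 hd with rfl | hu
  · rw [zero_add] at hz
    exact ⟨rfl, hl, (gβ_mul_inj hz).symm⟩
  · exfalso
    have h1 := congrArg Zsqrtd.re hz
    have h2 := congrArg Zsqrtd.im hz
    have h3 := gβ_parity a
    have h4 := gβ_parity (gval l)
    have h5 := hu.odd
    rw [Zsqrtd.re_add] at h1
    rw [Zsqrtd.im_add] at h2
    omega

/-- A representation of a non-multiple of `β` has a unit as least significant digit. -/
lemma gIsRep.odd {u a : GaussianInt} {l : List GaussianInt} (hu : IsU u)
    (h : gIsRep (u + gβ * a) l) :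
    ∃ d t, l = d :: t ∧ IsU d ∧ (∀ e ∈ t, e ∈ gD) ∧ u + gβ * a = d + gβ * gval t := by
  have h3 := gβ_parity a
  have h5 := hu.odd
  cases l with
  | nil =>
    exfalso
    rw [gIsRep_nil_iff] at h
    have h1 := congrArg Zsqrtd.re h
    have h2 := congrArg Zsqrtd.im h
    simp only [Zsqrtd.re_add, Zsqrtd.im_add, Zsqrtd.re_zero, Zsqrtd.im_zero] at h1 h2
    omega
  | cons d t =>
    obtain ⟨hd, hl, hz⟩ := gIsRep_cons.1 h
    rcases mem_gD_iff.1 hd with rfl | hd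
    · exfalso
      have h1 := congrArg Zsqrtd.re hz
      have h2 := congrArg Zsqrtd.im hz
      have h4 := gβ_parity (gval t)
      simp only [Zsqrtd.re_add, Zsqrtd.im_add, Zsqrtd.re_zero, Zsqrtd.im_zero] at h1 h2
      omega
    · exact ⟨d, t, rfl, hd, hl, hz⟩

lemma gNormalized_cons_cons (d e : GaussianInt) (l : List GaussianInt) :
    gNormalized (d :: e :: l) ↔ gNormalized (e :: l) := by
  simp [gNormalized]

lemma gNormalized_cons_unit {d : GaussianInt} (hd : d ≠ 0) (l : List GaussianInt) :
    gNormalized (d :: l) ↔ gNormalized l := by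
  cases l with
  | nil => simp [gNormalized, hd]
  | cons e t => exact gNormalized_cons_cons d e t

lemma eq_nil_of_rep_zero (l : List GaussianInt) (hl : gIsRep 0 l) (hn : gNormalized l) :
    l = [] := by
  induction l with
  | nil => rfl
  | cons d t ih =>
    exfalso
    rw [← mul_zero gβ] at hl
    obtain ⟨rfl, ht⟩ := hl.even
    cases t with
    | nil => simp [gNormalized] at hn
    | cons e s => simpa using ih ht ((gNormalized_cons_cons _ _ _).1 hn)

/-! ### Lower bounds for the weight -/

/-- Adding a unit to `z` raises the minimal weight by at most one. -/
lemma exists_rep_add_unit (n : ℕ) : ∀ (z u : GaussianInt) (l : List GaussianInt),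
    l.length ≤ n → IsU u → gIsRep z l →
      ∃ l', gIsRep (z + u) l' ∧ gweight l' ≤ gweight l + 1 := by
  have h0 : (0 : GaussianInt) ∈ gD := mem_gD_iff.2 (Or.inl rfl)
  have hnil : gIsRep 0 [] := gIsRep_nil_iff.2 rfl
  have hsingle : ∀ u, IsU u → gIsRep u [u] := fun u hu => by
    simpa using gIsRep.cons (mem_gD_iff.2 (Or.inr hu)) hnil
  induction n using Nat.strong_induction_on with
  | _ n ih =>
  intro z u l hln hu hl
  cases l with
  | nil =>
    rw [gIsRep_nil_iff] at hl
    subst hl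
    exact ⟨[u], by simpa using hsingle u hu, by simp [gweight_cons_unit hu.ne_zero]⟩
  | cons d t =>
    obtain ⟨hd, ht, rfl⟩ := gIsRep_cons.1 hl
    have htr : gIsRep (gval t) t := ⟨ht, rfl⟩
    rcases mem_gD_iff.1 hd with rfl | hdu
    · refine ⟨u :: t, ?_, ?_⟩
      · convert gIsRep.cons (mem_gD_iff.2 (Or.inr hu)) htr using 1; ring
      · simp [gweight_cons_unit hu.ne_zero]
    · rw [gweight_cons_unit hdu.ne_zero]
      rw [List.length_cons] at hln
      rcases hdu.add hu with h | ⟨v, hv, h⟩ | ⟨v, hv, h⟩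
      · refine ⟨0 :: t, ?_, by simp; omega⟩
        convert gIsRep.cons h0 htr using 1
        linear_combination h
      · obtain ⟨t', ht', hw⟩ := ih t.length (by omega) _ v t le_rfl hv htr
        refine ⟨0 :: t', ?_, by simp; omega⟩
        convert gIsRep.cons h0 ht' using 1
        linear_combination h
      · cases t with
        | nil =>
          refine ⟨[0, 0, v], ?_, by simp [gweight_cons_unit hv.ne_zero]⟩
          convert gIsRep.cons h0 (gIsRep.cons h0 (hsingle v hv)) using 1
          simp only [gval_nil]
          linear_combination h
        | cons e s =>
          obtain ⟨he, hs, -⟩ := gIsRep_cons.1 htr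
          rw [List.length_cons] at hln
          obtain ⟨s', hs', hw⟩ := ih s.length (by omega) _ v s le_rfl hv ⟨hs, rfl⟩
          refine ⟨0 :: e :: s', ?_, ?_⟩
          · convert gIsRep.cons h0 (gIsRep.cons he hs') using 1
            rw [gval_cons]
            linear_combination h
          · rw [gweight_cons_zero]
            by_cases he0 : e = 0
            · subst he0; simp; omega
            · rw [gweight_cons_unit he0, gweight_cons_unit he0]; omega

/-- Every representation of `z` has weight at least `h - j`. The offset `j` is kept separate from `h`
so that no truncated subtraction occurs. -/
def WLB (j h : ℕ) (z : GaussianInt) : Prop := ∀ l, gIsRep z l → h ≤ gweight l + j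

lemma WLB.mono {j j' h : ℕ} {z : GaussianInt} (hz : WLB j h z) (hj : j ≤ j') : WLB j' h z :=
  fun l hl => (hz l hl).trans (by omega)

lemma WLB.add_unit {j h : ℕ} {z u : GaussianInt} (hz : WLB j h z) (hu : IsU u) :
    WLB (j + 1) h (z + u) := by
  intro l hl
  obtain ⟨l', hl', hw⟩ := exists_rep_add_unit _ _ (-u) l le_rfl hu.neg hl
  have := hz l' (by simpa using hl')
  omega

lemma WLB.mul_gβ {j h : ℕ} {z : GaussianInt} (hz : WLB j h z) : WLB j h (gβ * z) := by
  intro l hl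
  cases l with
  | nil =>
    rw [gIsRep_nil_iff] at hl
    exact hz [] (gIsRep_nil_iff.2 (gβ_mul_inj (by rw [hl, mul_zero])))
  | cons d t =>
    obtain ⟨rfl, ht⟩ := hl.even
    simpa using hz t ht

lemma WLB.add_gβ_mul_unit {j h : ℕ} {z u : GaussianInt} (hz : WLB j h z) (hu : IsU u) :
    WLB (j + 1) h (z + gβ * u) := by
  intro l hl
  cases l with
  | nil =>
    rw [gIsRep_nil_iff] at hl
    have h1 : gIsRep (0 + gβ * (-u + gβ * 0)) [0, -u] :=
      gIsRep.cons (mem_gD_iff.2 (Or.inl rfl))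
        (gIsRep.cons (mem_gD_iff.2 (Or.inr hu.neg)) (gIsRep_nil_iff.2 rfl))
    have := hz [0, -u] (by convert h1 using 1; linear_combination hl)
    simp [gweight_cons_unit hu.neg.ne_zero] at this
    simp; omega
  | cons d t =>
    obtain ⟨hd, ht, he⟩ := gIsRep_cons.1 hl
    obtain ⟨t', ht', hw⟩ := exists_rep_add_unit _ _ (-u) t le_rfl hu.neg ⟨ht, rfl⟩
    have := hz (d :: t') (by
      convert gIsRep.cons hd ht' using 1
      linear_combination he)
    by_cases hd0 : d = 0
    · subst hd0
      rw [gweight_cons_zero] at *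
      omega
    · rw [gweight_cons_unit hd0] at *
      omega

lemma WLB.odd {j h : ℕ} {z z₁ z₂ z₃ z₄ : GaussianInt}
    (h₁ : z = 1 + gβ * z₁) (h₂ : z = -1 + gβ * z₂) (h₃ : z = gI + gβ * z₃)
    (h₄ : z = -gI + gβ * z₄)
    (w₁ : WLB (j + 1) h z₁) (w₂ : WLB (j + 1) h z₂) (w₃ : WLB (j + 1) h z₃)
    (w₄ : WLB (j + 1) h z₄) : WLB j h z := by
  intro l hl
  rw [h₁] at hl
  obtain ⟨d, t, rfl, hd, ht, he⟩ := hl.odd (Or.inl rfl)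
  rw [← h₁] at he
  rw [gweight_cons_unit hd.ne_zero]
  have key : ∀ a, z = d + gβ * a → WLB (j + 1) h a → h ≤ gweight t + 1 + j := by
    intro a ha hw
    have := hw t ⟨ht, gβ_mul_inj (add_left_cancel (he.symm.trans ha))⟩
    omega
  rcases hd with rfl | rfl | rfl | rfl
  exacts [key _ h₁ w₁, key _ h₂ w₂, key _ h₃ w₃, key _ h₄ w₄]

lemma WLB.mul_add_one {j h : ℕ} {z : GaussianInt} (hz : WLB j h z) :
    WLB j h (gβ * z + 1) := by
  refine WLB.odd (z₁ := z) (z₂ := z + gβ * gI) (z₃ := z + (-1)) (z₄ := z + (-gI))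
    ?_ ?_ ?_ ?_ (hz.mono (by omega)) (hz.add_gβ_mul_unit ?_) (hz.add_unit ?_) (hz.add_unit ?_)
  all_goals first
    | (ext <;> simp [gβ, gI] <;> ring)
    | simp [IsU]

/-! ### Multiplication by the imaginary unit -/

lemma gI_sq : gI * gI = -1 := by ext <;> simp [gI]

lemma gval_map_gI (l : List GaussianInt) : gval (l.map (gI * ·)) = gI * gval l := by
  induction l with
  | nil => simp
  | cons d t ih => simp [ih]; ring

lemma gI_mul_eq_zero {d : GaussianInt} : gI * d = 0 ↔ d = 0 := by
  constructor
  · intro h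
    linear_combination (-gI) * h + d * gI_sq
  · rintro rfl; simp

lemma gweight_map_gI (l : List GaussianInt) : gweight (l.map (gI * ·)) = gweight l := by
  induction l with
  | nil => rfl
  | cons d t ih =>
    by_cases hd : d = 0
    · subst hd; simp [ih]
    · rw [List.map_cons, gweight_cons_unit hd, gweight_cons_unit (mt gI_mul_eq_zero.1 hd), ih]

lemma gIsRep.map_gI {z : GaussianInt} {l : List GaussianInt} (hl : gIsRep z l) :
    gIsRep (gI * z) (l.map (gI * ·)) := by
  refine ⟨?_, by rw [gval_map_gI, hl.2]⟩
  intro d hd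
  obtain ⟨e, he, rfl⟩ := List.mem_map.1 hd
  rcases mem_gD_iff.1 (hl.1 e he) with rfl | hu
  · simp [gD]
  · exact mem_gD_iff.2 (Or.inr hu.mul_gI)

lemma gNormalized_map_gI {l : List GaussianInt} (hl : gNormalized l) :
    gNormalized (l.map (gI * ·)) := by
  unfold gNormalized at *
  rw [List.getLast?_map]
  intro h
  obtain ⟨a, ha, h0⟩ := Option.map_eq_some_iff.1 h
  rw [gI_mul_eq_zero.1 h0] at ha
  exact hl ha

lemma gI_pow_four (z : GaussianInt) : gI * (gI * (gI * (gI * z))) = z := by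
  linear_combination (gI * gI * z - z) * gI_sq

lemma WLB.gI_mul {j h : ℕ} {z : GaussianInt} (hz : WLB j h z) : WLB j h (gI * z) := by
  intro l hl
  have h1 := hz _ (by simpa only [gI_pow_four] using hl.map_gI.map_gI.map_gI)
  simpa only [gweight_map_gI] using h1

lemma WLB.mul_add_unit {j h : ℕ} {z u : GaussianInt} (hz : WLB j h z) (hu : IsU u) :
    WLB j h (gβ * z + u) := by
  rcases hu with rfl | rfl | rfl | rfl
  · exact hz.mul_add_one
  · convert hz.gI_mul.gI_mul.mul_add_one.gI_mul.gI_mul using 1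
    ext <;> simp [gβ, gI] <;> ring
  · convert hz.gI_mul.gI_mul.gI_mul.mul_add_one.gI_mul using 1
    ext <;> simp [gβ, gI] <;> ring
  · convert hz.gI_mul.mul_add_one.gI_mul.gI_mul.gI_mul using 1
    ext <;> simp [gβ, gI] <;> ring

lemma WLB.block_one {h : ℕ} {x : GaussianInt} (hx : WLB 0 h x) :
    WLB 0 (h + 1) (1 + gβ * (gβ * (gβ * x))) := by
  have up : ∀ z, WLB 0 h z → WLB 1 (h + 1) z := fun z hz l hl => by
    have := hz l hl
    omega
  refine WLB.odd (z₁ := gβ * (gβ * x)) (z₂ := gβ * (gβ * x + gI))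
    (z₃ := gβ * (gβ * x) + (-1)) (z₄ := gβ * (gβ * x) + (-gI)) rfl ?_ ?_ ?_
    (up _ hx.mul_gβ.mul_gβ) (up _ (hx.mul_add_unit ?_).mul_gβ)
    (up _ (hx.mul_gβ.mul_add_unit ?_)) (up _ (hx.mul_gβ.mul_add_unit ?_))
  all_goals first
    | (ext <;> simp [gβ, gI] <;> ring)
    | simp [IsU]

lemma WLB.block {h : ℕ} {x u : GaussianInt} (hx : WLB 0 h x) (hu : IsU u) :
    WLB 0 (h + 1) (u + gβ * (gβ * (gβ * x))) := by
  rcases hu with rfl | rfl | rfl | rfl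
  · exact hx.block_one
  · convert hx.gI_mul.gI_mul.block_one.gI_mul.gI_mul using 1
    linear_combination (-1 + (1 - gI * gI) * (gβ * (gβ * (gβ * x)))) * gI_sq
  · convert hx.gI_mul.gI_mul.gI_mul.block_one.gI_mul using 1
    linear_combination (-(gI * gI - 1) * (gβ * (gβ * (gβ * x)))) * gI_sq
  · convert hx.gI_mul.block_one.gI_mul.gI_mul.gI_mul using 1
    linear_combination (-gI - (gI * gI - 1) * (gβ * (gβ * (gβ * x)))) * gI_sq

/-! ### Counting representations -/

/-- The normalized representations of `z` of weight `h - j` (none if `h < j`). -/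
def repSet (j h : ℕ) (z : GaussianInt) : Set (List GaussianInt) :=
  {l | gIsRep z l ∧ gNormalized l ∧ gweight l + j = h}

/-- The number of normalized representations of `z` of weight `h - j`. -/
def cnt (j h : ℕ) (z : GaussianInt) : ℤ := ((repSet j h z).ncard : ℤ)

lemma repSet_even {j h : ℕ} {a : GaussianInt} (ha : a ≠ 0) :
    repSet j h (gβ * a) = (List.cons 0) '' repSet j h a := by
  ext l
  constructor
  · rintro ⟨hr, hn, hw⟩
    cases l with
    | nil =>
      rw [gIsRep_nil_iff] at hr
      exact absurd (gβ_mul_inj (by rw [hr, mul_zero])) ha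
    | cons d t =>
      obtain ⟨rfl, ht⟩ := hr.even
      refine ⟨t, ⟨ht, ?_, by simpa using hw⟩, rfl⟩
      cases t with
      | nil => simp [gNormalized]
      | cons e s => exact (gNormalized_cons_cons _ _ _).1 hn
  · rintro ⟨t, ⟨hr, hn, hw⟩, rfl⟩
    refine ⟨?_, ?_, by simpa using hw⟩
    · convert gIsRep.cons (d := 0) (mem_gD_iff.2 (Or.inl rfl)) hr using 1; ring
    · cases t with
      | nil => exact absurd (gIsRep_nil_iff.1 hr) ha
      | cons e s => exact (gNormalized_cons_cons _ _ _).2 hn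

lemma repSet_odd {j h : ℕ} {z z₁ z₂ z₃ z₄ : GaussianInt}
    (h₁ : z = 1 + gβ * z₁) (h₂ : z = -1 + gβ * z₂) (h₃ : z = gI + gβ * z₃)
    (h₄ : z = -gI + gβ * z₄) :
    repSet j h z = List.cons 1 '' repSet (j + 1) h z₁ ∪ (List.cons (-1) '' repSet (j + 1) h z₂ ∪
      (List.cons gI '' repSet (j + 1) h z₃ ∪ List.cons (-gI) '' repSet (j + 1) h z₄)) := by
  apply Set.Subset.antisymm
  · rintro l ⟨hr, hn, hw⟩
    rw [h₁] at hr
    obtain ⟨d, t, rfl, hd, ht, he⟩ := hr.odd (Or.inl rfl)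
    rw [← h₁] at he
    rw [gweight_cons_unit hd.ne_zero] at hw
    rw [gNormalized_cons_unit hd.ne_zero] at hn
    have key : ∀ a, z = d + gβ * a → d :: t ∈ List.cons d '' repSet (j + 1) h a := fun a ha =>
      ⟨t, ⟨⟨ht, gβ_mul_inj (add_left_cancel (he.symm.trans ha))⟩, hn, by omega⟩, rfl⟩
    rcases hd with rfl | rfl | rfl | rfl
    · exact Or.inl (key _ h₁)
    · exact Or.inr (Or.inl (key _ h₂))
    · exact Or.inr (Or.inr (Or.inl (key _ h₃)))
    · exact Or.inr (Or.inr (Or.inr (key _ h₄)))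
  · have key : ∀ d a, IsU d → z = d + gβ * a →
        List.cons d '' repSet (j + 1) h a ⊆ repSet j h z := by
      rintro d a hd rfl _ ⟨t, ⟨hr, hn, hw⟩, rfl⟩
      refine ⟨gIsRep.cons (mem_gD_iff.2 (Or.inr hd)) hr,
        (gNormalized_cons_unit hd.ne_zero _).2 hn, ?_⟩
      rw [gweight_cons_unit hd.ne_zero]
      omega
    exact Set.union_subset (key _ _ (by simp [IsU]) h₁) (Set.union_subset
      (key _ _ (by simp [IsU]) h₂) (Set.union_subset (key _ _ (by simp [IsU]) h₃)
      (key _ _ (by simp [IsU]) h₄)))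

/-- The four quotients `(z - u)/β` for an odd `z = βa + 1`. -/
lemma odd_quotients (a : GaussianInt) :
    gβ * a + 1 = 1 + gβ * a ∧ gβ * a + 1 = -1 + gβ * (a + gβ * gI) ∧
      gβ * a + 1 = gI + gβ * (a - 1) ∧ gβ * a + 1 = -gI + gβ * (a - gI) := by
  refine ⟨?_, ?_, ?_, ?_⟩ <;> ext <;> simp [gβ, gI] <;> ring

/-- Finiteness, by induction on a bound for the weight and then on the norm of `z`: dividing an even
`z` by `β` halves its norm, and an odd `z` uses up a nonzero digit. -/
lemma repSet_finite (n : ℕ) : ∀ (j h : ℕ) (z : GaussianInt), h < j + n →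
    (repSet j h z).Finite := by
  induction n with
  | zero =>
    intro j h z hlt
    convert Set.finite_empty
    ext l
    simp only [repSet, Set.mem_ofPred_eq, Set.mem_empty_iff_false, iff_false]
    rintro ⟨-, -, hw⟩
    omega
  | succ n ih =>
    intro j h z hlt
    induction hm : (z.re ^ 2 + z.im ^ 2).toNat using Nat.strong_induction_on generalizing z with
    | _ m ihm =>
    rcases gauss_cases z with ⟨a, rfl⟩ | ⟨a, rfl⟩
    · by_cases ha : a = 0
      · subst ha
        refine (Set.finite_singleton []).subset ?_
        rintro l ⟨hr, hn, -⟩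
        rw [mul_zero] at hr
        exact eq_nil_of_rep_zero l hr hn
      · rw [repSet_even ha]
        refine Set.Finite.image _ (ihm _ ?_ a rfl)
        have h1 : (gβ * a).re ^ 2 + (gβ * a).im ^ 2 = 2 * (a.re ^ 2 + a.im ^ 2) := by
          simp [gβ]; ring
        have h2 : 0 < a.re ^ 2 + a.im ^ 2 := by
          by_contra hc
          exact ha (by ext <;> simp <;> nlinarith [sq_nonneg a.re, sq_nonneg a.im])
        rw [h1] at hm
        omega
    · obtain ⟨h₁, h₂, h₃, h₄⟩ := odd_quotients a
      rw [repSet_odd h₁ h₂ h₃ h₄]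
      exact ((ih _ _ _ (by omega)).image _).union (((ih _ _ _ (by omega)).image _).union
        (((ih _ _ _ (by omega)).image _).union ((ih _ _ _ (by omega)).image _)))

lemma cnt_even {j h : ℕ} {z a : GaussianInt} (hz : z = gβ * a) : cnt j h z = cnt j h a := by
  subst hz
  by_cases ha : a = 0
  · subst ha; rw [mul_zero]
  · rw [cnt, cnt, repSet_even ha, Set.ncard_image_of_injective _ List.cons_injective]

lemma cnt_odd {j h : ℕ} {z : GaussianInt} (z₁ z₂ z₃ z₄ : GaussianInt)
    (h₁ : z = 1 + gβ * z₁) (h₂ : z = -1 + gβ * z₂) (h₃ : z = gI + gβ * z₃)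
    (h₄ : z = -gI + gβ * z₄) :
    cnt j h z = cnt (j + 1) h z₁ + cnt (j + 1) h z₂ + cnt (j + 1) h z₃ + cnt (j + 1) h z₄ := by
  have fin : ∀ (d a : GaussianInt), (List.cons d '' repSet (j + 1) h a).Finite := fun d a =>
    (repSet_finite (h + 1) _ _ _ (by omega)).image _
  have disj : ∀ (d e a b : GaussianInt), d ≠ e →
      Disjoint (List.cons d '' repSet (j + 1) h a) (List.cons e '' repSet (j + 1) h b) := by
    intro d e a b hde
    rw [Set.disjoint_left]
    rintro _ ⟨t, -, rfl⟩ ⟨s, -, hs⟩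
    exact hde (List.cons.inj hs).1.symm
  have n1 : (1 : GaussianInt) ≠ -1 := by simp [Zsqrtd.ext_iff]
  have n2 : (1 : GaussianInt) ≠ gI := by simp [Zsqrtd.ext_iff, gI]
  have n3 : (1 : GaussianInt) ≠ -gI := by simp [Zsqrtd.ext_iff, gI]
  have n4 : (-1 : GaussianInt) ≠ gI := by simp [Zsqrtd.ext_iff, gI]
  have n5 : (-1 : GaussianInt) ≠ -gI := by simp [Zsqrtd.ext_iff, gI]
  have n6 : gI ≠ -gI := by simp [Zsqrtd.ext_iff, gI]
  unfold cnt
  rw [repSet_odd h₁ h₂ h₃ h₄,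
    Set.ncard_union_eq (Set.disjoint_union_right.2 ⟨disj _ _ _ _ n1,
      Set.disjoint_union_right.2 ⟨disj _ _ _ _ n2, disj _ _ _ _ n3⟩⟩)
      (fin _ _) ((fin _ _).union ((fin _ _).union (fin _ _))),
    Set.ncard_union_eq (Set.disjoint_union_right.2 ⟨disj _ _ _ _ n4, disj _ _ _ _ n5⟩)
      (fin _ _) ((fin _ _).union (fin _ _)),
    Set.ncard_union_eq (disj _ _ _ _ n6) (fin _ _) (fin _ _)]
  simp only [Set.ncard_image_of_injective _ List.cons_injective]
  push_cast
  ring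

lemma cnt_eq_zero {j h : ℕ} {z : GaussianInt} (hz : WLB j h z) : cnt (j + 1) h z = 0 := by
  have : repSet (j + 1) h z = ∅ := by
    ext l
    simp only [repSet, Set.mem_ofPred_eq, Set.mem_empty_iff_false, iff_false]
    rintro ⟨hr, -, hw⟩
    have := hz l hr
    omega
  simp [cnt, this]

lemma cnt_succ (j h : ℕ) (z : GaussianInt) : cnt (j + 1) (h + 1) z = cnt j h z := by
  have : repSet (j + 1) (h + 1) z = repSet j h z := by
    ext l
    simp only [repSet, Set.mem_ofPred_eq]
    refine and_congr_right fun _ => and_congr_right fun _ => by omega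
  simp [cnt, this]

lemma cnt_gI_mul (j h : ℕ) (z : GaussianInt) : cnt j h (gI * z) = cnt j h z := by
  have le : ∀ w, cnt j h w ≤ cnt j h (gI * w) := by
    intro w
    have inj : Function.Injective (List.map (gI * ·)) := List.map_injective_iff.2 fun a b hab => by
      have : gI * (a - b) = 0 := by rw [mul_sub]; exact sub_eq_zero.2 hab
      exact sub_eq_zero.1 (gI_mul_eq_zero.1 this)
    unfold cnt
    rw [← Set.ncard_image_of_injective _ inj]
    refine Nat.cast_le.2 (Set.ncard_le_ncard ?_ (repSet_finite (h + 1) _ _ _ (by omega)))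
    rintro _ ⟨t, ⟨hr, hn, hw⟩, rfl⟩
    exact ⟨hr.map_gI, gNormalized_map_gI hn, by rw [gweight_map_gI]; exact hw⟩
  refine le_antisymm ?_ (le z)
  have h1 := ((le (gI * z)).trans (le _)).trans (le _)
  rwa [gI_pow_four] at h1

/-! ### The vector of counts and its recursions -/

/-- The state vector of `x`: the number of representations of `x` of weight `h`, followed by the
numbers of representations of weight `h - 1` of `x - iᵏ` and of `x - iᵏ(1+i)`, `k = 0, 1, 2, 3`. -/
def stateVec (h : ℕ) (x : GaussianInt) : Fin 9 → ℤ :=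
  ![cnt 0 h x, cnt 1 h (x - 1), cnt 1 h (x - gI), cnt 1 h (x + 1), cnt 1 h (x + gI),
    cnt 1 h (x - 1 - gI), cnt 1 h (x + 1 - gI), cnt 1 h (x + 1 + gI), cnt 1 h (x - 1 + gI)]

lemma stateVec_gI_mul (h : ℕ) (x : GaussianInt) : stateVec h (gI * x) = stateVec h x ᵥ* R9 := by
  have key : ∀ j a b, a = gI * b → cnt j h a = cnt j h b := fun j a b hab => by
    rw [hab, cnt_gI_mul]
  funext k
  fin_cases k <;>
    simp [stateVec, R9, Matrix.vecMul, dotProduct, Fin.sum_univ_succ] <;> apply key <;>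
    ext <;> simp [gI] <;> ring

lemma stateVec_mul_gβ {h : ℕ} {x : GaussianInt} (hx : WLB 0 h x) :
    stateVec h (gβ * x) = stateVec h x ᵥ* A0 := by
  have e0 : cnt 0 h (gβ * x) = cnt 0 h x := cnt_even rfl
  have e1 : cnt 1 h (gβ * x - 1) = 0 :=
    cnt_eq_zero (by rw [sub_eq_add_neg]; exact hx.mul_add_unit (by simp [IsU]))
  have e2 : cnt 1 h (gβ * x - gI) = 0 :=
    cnt_eq_zero (by rw [sub_eq_add_neg]; exact hx.mul_add_unit (by simp [IsU]))
  have e3 : cnt 1 h (gβ * x + 1) = 0 := cnt_eq_zero (hx.mul_add_unit (by simp [IsU]))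
  have e4 : cnt 1 h (gβ * x + gI) = 0 := cnt_eq_zero (hx.mul_add_unit (by simp [IsU]))
  have e5 : cnt 1 h (gβ * x - 1 - gI) = cnt 1 h (x + gI) :=
    cnt_even (by ext <;> simp [gβ, gI] <;> ring)
  have e6 : cnt 1 h (gβ * x + 1 - gI) = cnt 1 h (x - 1) :=
    cnt_even (by ext <;> simp [gβ, gI] <;> ring)
  have e7 : cnt 1 h (gβ * x + 1 + gI) = cnt 1 h (x - gI) :=
    cnt_even (by ext <;> simp [gβ, gI] <;> ring)
  have e8 : cnt 1 h (gβ * x - 1 + gI) = cnt 1 h (x + 1) :=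
    cnt_even (by ext <;> simp [gβ, gI] <;> ring)
  funext k
  fin_cases k <;>
    simp [stateVec, A0, Matrix.vecMul, dotProduct, Fin.sum_univ_succ, e0, e1, e2, e3, e4, e5, e6, e7, e8]

/-- Representations of `βx + i` of weight `h`. -/
lemma cnt_mul_add_gI {h : ℕ} {x : GaussianInt} (hx : WLB 0 h x) :
    cnt 0 h (gβ * x + gI) =
      cnt 1 h (x + 1) + cnt 1 h (x - gI) + cnt 1 h (x + 1 - gI) := by
  rw [cnt_odd (x + 1) (x - gI) x (x + 1 - gI), cnt_eq_zero hx]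
  · ring
  all_goals ext <;> simp [gβ, gI] <;> ring

/-- Representations of `β²x - 1` of weight `h`. -/
lemma cnt_sq_sub_one {h : ℕ} {x : GaussianInt} (hx : WLB 0 h x) :
    cnt 0 h (gβ * (gβ * x) - 1) = cnt 1 h (x - gI) := by
  rw [cnt_odd (gβ * (x - gI)) (gβ * x) (gβ * x + gI) (gβ * x + 1),
    cnt_eq_zero hx.mul_gβ, cnt_eq_zero (hx.mul_add_unit (by simp [IsU])),
    cnt_eq_zero (hx.mul_add_unit (by simp [IsU])), cnt_even rfl]
  · simp
  all_goals ext <;> simp [gβ, gI] <;> ring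

/-- Representations of `β²x - i` of weight `h`. -/
lemma cnt_sq_sub_gI {h : ℕ} {x : GaussianInt} (hx : WLB 0 h x) :
    cnt 0 h (gβ * (gβ * x) - gI) = cnt 1 h (x + 1) := by
  rw [cnt_odd (gβ * x + gI) (gβ * x - 1) (gβ * (x + 1)) (gβ * x),
    cnt_eq_zero hx.mul_gβ, cnt_eq_zero (hx.mul_add_unit (by simp [IsU])),
    cnt_eq_zero (by rw [sub_eq_add_neg]; exact hx.mul_add_unit (by simp [IsU])), cnt_even rfl]
  · simp
  all_goals ext <;> simp [gβ, gI] <;> ring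

/-- Representations of `β³x + 2 - i` of weight `h`. -/
lemma cnt_cube_add_two_sub_gI {h : ℕ} {x : GaussianInt} (hx : WLB 0 h x) :
    cnt 0 h (1 + gβ * (gβ * (gβ * x)) + 1 - gI) = cnt 1 h (x - gI) := by
  have hw : WLB 0 h (gβ * (gβ * x) - 2 - gI) := by
    refine WLB.odd (z₁ := gβ * (x + gβ * (-1)) + 1) (z₂ := gβ * x + gI)
      (z₃ := gβ * (x + gβ * (-1))) (z₄ := gβ * (x + (-gI))) ?_ ?_ ?_ ?_
      ((hx.add_gβ_mul_unit ?_).mul_add_unit ?_) ((hx.mul_add_unit ?_).mono (by omega))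
      (hx.add_gβ_mul_unit ?_).mul_gβ (hx.add_unit ?_).mul_gβ
    all_goals first
      | (ext <;> simp [gβ, gI] <;> ring)
      | simp [IsU]
  rw [cnt_odd (gβ * (gβ * x) + (-1)) (gβ * (gβ * x) - 2 - gI) (gβ * (gβ * (x - gI)))
    (gβ * (gβ * x + gI)), cnt_eq_zero (hx.mul_gβ.mul_add_unit (by simp [IsU])), cnt_eq_zero hw,
    cnt_eq_zero (hx.mul_add_unit (by simp [IsU])).mul_gβ, cnt_even rfl, cnt_even rfl]
  · simp
  all_goals ext <;> simp [gβ, gI] <;> ring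

/-- Representations of `β³x + 2 + i` of weight `h`. -/
lemma cnt_cube_add_two_add_gI {h : ℕ} {x : GaussianInt} (hx : WLB 0 h x) :
    cnt 0 h (1 + gβ * (gβ * (gβ * x)) + 1 + gI) = cnt 1 h (x + 1) := by
  have hw : WLB 0 h (gβ * (gβ * x) - 1 - 2 * gI) := by
    refine WLB.odd (z₁ := gβ * (x + gβ * (-1))) (z₂ := gβ * (x + 1))
      (z₃ := gβ * (x + gβ * (-1)) + (-1)) (z₄ := gβ * x + gI) ?_ ?_ ?_ ?_
      (hx.add_gβ_mul_unit ?_).mul_gβ (hx.add_unit ?_).mul_gβ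
      ((hx.add_gβ_mul_unit ?_).mul_add_unit ?_) ((hx.mul_add_unit ?_).mono (by omega))
    all_goals first
      | (ext <;> simp [gβ, gI] <;> ring)
      | simp [IsU]
  rw [cnt_odd (gβ * (gβ * x) + (-gI)) (gβ * (gβ * x) - 1 - 2 * gI) (gβ * (gβ * x + gI))
    (gβ * (gβ * (x + 1))), cnt_eq_zero (hx.mul_gβ.mul_add_unit (by simp [IsU])), cnt_eq_zero hw,
    cnt_eq_zero (hx.mul_add_unit (by simp [IsU])).mul_gβ, cnt_even rfl, cnt_even rfl]
  · simp
  all_goals ext <;> simp [gβ, gI] <;> ring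

lemma stateVec_block_one {h : ℕ} {x : GaussianInt} (hx : WLB 0 h x) :
    stateVec (h + 1) (1 + gβ * (gβ * (gβ * x))) = stateVec h x ᵥ* A1 := by
  have e3 : cnt 1 (h + 1) (1 + gβ * (gβ * (gβ * x)) + 1) =
      cnt 1 h (x + 1) + cnt 1 h (x - gI) + cnt 1 h (x + 1 - gI) := by
    rw [cnt_succ, cnt_even (a := gβ * (gβ * x + gI)) (by ext <;> simp [gβ, gI] <;> ring),
      cnt_even rfl, cnt_mul_add_gI hx]
  have e1 : cnt 1 (h + 1) (1 + gβ * (gβ * (gβ * x)) - 1) = cnt 0 h x := by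
    rw [cnt_succ, add_sub_cancel_left, cnt_even rfl, cnt_even rfl, cnt_even rfl]
  have e2 : cnt 1 (h + 1) (1 + gβ * (gβ * (gβ * x)) - gI) = cnt 1 h (x - gI) := by
    rw [cnt_succ, cnt_even (a := gβ * (gβ * x) - 1) (by ext <;> simp [gβ, gI] <;> ring),
      cnt_sq_sub_one hx]
  have e4 : cnt 1 (h + 1) (1 + gβ * (gβ * (gβ * x)) + gI) = cnt 1 h (x + 1) := by
    rw [cnt_succ, cnt_even (a := gβ * (gβ * x) - gI) (by ext <;> simp [gβ, gI] <;> ring),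
      cnt_sq_sub_gI hx]
  have e0 : cnt 0 (h + 1) (1 + gβ * (gβ * (gβ * x))) =
      cnt 0 h x + 2 * cnt 1 h (x - gI) + 2 * cnt 1 h (x + 1) + cnt 1 h (x + 1 - gI) := by
    rw [cnt_odd (gβ * (gβ * x)) (gβ * (gβ * x + gI)) (gβ * (gβ * x) - 1) (gβ * (gβ * x) - gI)]
    · simp only [cnt_succ]
      rw [cnt_even rfl, cnt_even rfl, cnt_even (z := gβ * (gβ * x + gI)) rfl, cnt_mul_add_gI hx,
        cnt_sq_sub_one hx, cnt_sq_sub_gI hx]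
      ring
    all_goals ext <;> simp [gβ, gI] <;> ring
  have e5 : cnt 1 (h + 1) (1 + gβ * (gβ * (gβ * x)) - 1 - gI) = 0 := by
    refine cnt_eq_zero ?_
    convert hx.block (u := -gI) (by simp [IsU]) using 1
    ring
  have e8 : cnt 1 (h + 1) (1 + gβ * (gβ * (gβ * x)) - 1 + gI) = 0 := by
    refine cnt_eq_zero ?_
    convert hx.block (u := gI) (by simp [IsU]) using 1
    ring
  have e6 : cnt 1 (h + 1) (1 + gβ * (gβ * (gβ * x)) + 1 - gI) = cnt 1 h (x - gI) := by
    rw [cnt_succ, cnt_cube_add_two_sub_gI hx]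
  have e7 : cnt 1 (h + 1) (1 + gβ * (gβ * (gβ * x)) + 1 + gI) = cnt 1 h (x + 1) := by
    rw [cnt_succ, cnt_cube_add_two_add_gI hx]
  unfold stateVec
  rw [e0, e1, e2, e3, e4, e5, e6, e7, e8]
  funext k
  fin_cases k <;>
    simp [A1, Matrix.vecMul, dotProduct, Fin.sum_univ_succ] <;> ring

lemma R9_mul_transpose : R9 * R9ᵀ = 1 := by
  unfold R9
  decide

/-- Conjugation by `R` turns the recursion for the digit `u` into that for the digit `iu`. -/
lemma stateVec_rotate {h : ℕ} {u : GaussianInt} {A : Matrix (Fin 9) (Fin 9) ℤ}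
    (hA : ∀ x, WLB 0 h x →
      stateVec (h + 1) (u + gβ * (gβ * (gβ * x))) = stateVec h x ᵥ* A) :
    ∀ x, WLB 0 h x →
      stateVec (h + 1) (gI * u + gβ * (gβ * (gβ * x))) = stateVec h x ᵥ* (R9ᵀ * A * R9) := by
  intro x hx
  obtain ⟨w, hw, rfl⟩ : ∃ w, WLB 0 h w ∧ x = gI * w :=
    ⟨_, hx.gI_mul.gI_mul.gI_mul, (gI_pow_four x).symm⟩
  have h1 : gI * u + gβ * (gβ * (gβ * (gI * w))) = gI * (u + gβ * (gβ * (gβ * w))) := by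
    ring
  rw [h1, stateVec_gI_mul, hA w hw, stateVec_gI_mul]
  simp only [Matrix.vecMul_vecMul]
  rw [← Matrix.mul_assoc, ← Matrix.mul_assoc, R9_mul_transpose, Matrix.one_mul]

lemma stateVec_block {h : ℕ} {x u : GaussianInt} (hx : WLB 0 h x) (hu : IsU u) :
    stateVec (h + 1) (u + gβ * (gβ * (gβ * x))) = stateVec h x ᵥ* Amat u := by
  have h1 := stateVec_rotate (h := h) (fun x hx => stateVec_block_one hx)
  have h2 := stateVec_rotate h1
  have h3 := stateVec_rotate h2
  have t1 : gI * 1 = gI := mul_one _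
  have t2 : gI * gI = -1 := gI_sq
  have t3 : gI * (-1) = -gI := by ring
  rw [t1] at h1 h2 h3
  rw [t2] at h2 h3
  rw [t3] at h3
  rcases hu with rfl | rfl | rfl | rfl
  · simpa [Amat] using stateVec_block_one hx
  · have : Amat (-1) = Am1 := by simp [Amat, Zsqrtd.ext_iff, gI]
    rw [this]; exact h2 x hx
  · have : Amat gI = Ai := by simp [Amat, Zsqrtd.ext_iff, gI]
    rw [this]; exact h1 x hx
  · have : Amat (-gI) = Ami := by simp [Amat, Zsqrtd.ext_iff, gI]
    rw [this]; exact h3 x hx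

lemma stateVec_zero : stateVec 0 0 = e9 0 := by
  have hc : ∀ z, cnt 1 0 z = 0 := fun z => cnt_eq_zero fun l _ => Nat.zero_le _
  have h0 : cnt 0 0 0 = 1 := by
    have : repSet 0 0 0 = {[]} := by
      refine Set.Subset.antisymm (fun l hl => eq_nil_of_rep_zero l hl.1 hl.2.1) ?_
      rintro _ rfl
      exact ⟨gIsRep_nil_iff.2 rfl, by simp [gNormalized], rfl⟩
    rw [cnt, this, Set.ncard_singleton]
    rfl
  funext k
  fin_cases k <;> simp [stateVec, e9, hc, h0]

/-- A concatenation of blocks has minimal weight, and its state vector is the first row of the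
matrix product. -/
lemma blocks_invariant (blocks : List (List GaussianInt))
    (hblocks : ∀ b ∈ blocks, b = [0] ∨ ∃ d ∈ gD, d ≠ 0 ∧ b = [0, 0, d]) :
    WLB 0 (gweight blocks.flatten) (gval blocks.flatten.reverse) ∧
    gweight blocks.flatten = gweight (blocks.map (fun b => b.getLastD 0)) ∧
    stateVec (gweight blocks.flatten) (gval blocks.flatten.reverse) =
      e9 0 ᵥ* (blocks.map (fun b => Amat (b.getLastD 0))).prod := by
  induction blocks using List.reverseRecOn with
  | nil => exact ⟨fun l _ => Nat.zero_le _, rfl, by simpa using stateVec_zero⟩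
  | append_singleton bs b ih =>
    obtain ⟨hw, hc, hv⟩ := ih fun b hb => hblocks b (by simp [hb])
    simp only [List.flatten_append, List.flatten_singleton, List.reverse_append, List.map_append,
      List.map_cons, List.map_nil, List.prod_append, List.prod_singleton, gweight_append,
      ← Matrix.vecMul_vecMul, ← hv, ← hc]
    rcases hblocks b (by simp) with rfl | ⟨d, hd, hd0, rfl⟩
    · have hA : Amat 0 = A0 := by simp [Amat]
      simp only [List.reverse_singleton, List.singleton_append, gval_cons, zero_add,
        gweight_cons_zero, gweight_nil, add_zero, List.getLastD_cons, List.getLastD_nil, hA]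
      exact ⟨hw.mul_gβ, trivial, stateVec_mul_gβ hw⟩
    · have hu : IsU d := (mem_gD_iff.1 hd).resolve_left hd0
      have hr : [0, 0, d].reverse = [d, 0, 0] := rfl
      simp only [hr, List.cons_append, List.nil_append, gval_cons, zero_add,
        gweight_cons_zero, gweight_cons_unit hd0, gweight_nil, List.getLastD_cons,
        List.getLastD_nil]
      exact ⟨hw.block hu, trivial, stateVec_block hw hu⟩

/-- If a representation of `x` (most significant digit first) is a
concatenation of blocks from `C = {0, 001, 00i, 00(-1), 00(-i)}`, then its
number of nonzero digits equals the number of blocks with nonzero last digit,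
and the number of optimal representations of `x` is `e A_{d_1} ⋯ A_{d_n} eᵀ`,
where `d_ℓ` is the last digit of the `ℓ`-th block. -/
theorem stmt6 (x : GaussianInt) (blocks : List (List GaussianInt))
    (hblocks : ∀ b ∈ blocks, b = [0] ∨ ∃ d ∈ gD, d ≠ 0 ∧ b = [0, 0, d])
    (hrep : gIsRep x blocks.flatten.reverse) :
    gweight blocks.flatten = gweight (blocks.map (fun b => b.getLastD 0)) ∧
    (gnumOpt x : ℤ) =
      (e9 * (blocks.map (fun b => Amat (b.getLastD 0))).prod * e9ᵀ) 0 0 := by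
  obtain ⟨hw, hc, hv⟩ := blocks_invariant blocks hblocks
  refine ⟨hc, ?_⟩
  rw [hrep.2] at hw hv
  -- The block string itself attains the lower bound, so optimality means weight exactly that bound.
  have hset : {l | gOptimal x l} = repSet 0 (gweight blocks.flatten) x := by
    ext l
    constructor
    · rintro ⟨hr, hn, hm⟩
      have h1 := hm _ hrep
      have h2 := hw l hr
      rw [gweight_reverse] at h1
      exact ⟨hr, hn, by omega⟩
    · rintro ⟨hr, hn, hwt⟩
      refine ⟨hr, hn, fun l' hl' => ?_⟩
      have := hw l' hl'
      omega
  have hcnt : (gnumOpt x : ℤ) = cnt 0 (gweight blocks.flatten) x := by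
    rw [cnt, ← hset]
    rfl
  have hv0 := congrFun hv 0
  rw [hcnt]
  have hlast : ∀ P : Matrix (Fin 9) (Fin 9) ℤ, (e9 * P * e9ᵀ) 0 0 = (e9 0 ᵥ* P) 0 := by
    intro P
    simp [e9, Matrix.mul_apply, Matrix.vecMul, dotProduct, Fin.sum_univ_succ]
  rw [hlast, ← hv0]
  rfl
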